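/- Let V be a finite-dimensional real inner product space, r ≥ 3, and let Cl⁰_r denote the even subalgebra of the Clifford algebra over ℝ of the negative-definite quadratic form Q(v) = -‖v‖² on ℝ^r, with canonical embedding ι and standard orthonormal basis e_1, …, e_r. Let φ : Cl⁰_r → End(V) be a unital ℝ-algebra homomorphism such that J_{ij} := φ(ι(e_i) * ι(e_j)) is a skew-adjoint endomorphism of V for all i ≠ j. Let κ ∈ ℝ and let R : V × V → End(V) be an ℝ-bilinear map satisfying, for all X, Y ∈ V, the identity [R(X,Y), J_{12}] = κ Σ_{s=3}^r ( ⟨J_{s1}X, Y⟩ J_{s2} − ⟨J_{s2}X, Y⟩ J_{s1} ). Then for all X, Y ∈ V: −J_{12} ∘ [R(J_{12}X, Y), J_{12}] = κ Σ_{s=3}^r ( −⟨J_{s2}X, Y⟩ J_{s1} + ⟨J_{s1}X, Y⟩ J_{s2} ). -/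

import Mathlib

open scoped RealInnerProductSpace

/-!
Write `J x y` for the image of `x * y` under a representation of the even Clifford algebra. If `a`,
`b` and `s` are mutually orthogonal, then `J s a * J a b = Q a • J s b = -(J a b * J s a)` and
`J s b * J a b = -(Q b • J s a) = -(J a b * J s b)`, so multiplication by `J a b` on either side
interchanges `J s a` and `J s b` up to scalars. Replacing `X` by `J a b X` and composing with
`J a b` therefore swaps the two terms of each summand of the curvature identity twice, and the
scalars combine to `Q a * Q b`, which is `1` when `Q a = Q b = -1`.
-/

open CliffordAlgebra

section EvenHom

variable {K M A : Type*} [CommRing K] [AddCommGroup M] [Module K M] [Ring A] [Algebra K A]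
  {Q : QuadraticForm K M} (g : EvenHom Q A) {x y z : M}

variable (x y) in
theorem evenHom_bilin_add_swap :
    g.bilin x y + g.bilin y x = algebraMap K A (QuadraticMap.polar Q x y) := by
  have h := g.contract (x + y)
  rw [map_add, map_add, LinearMap.add_apply, LinearMap.add_apply, g.contract, g.contract] at h
  rw [QuadraticMap.polar, map_sub, map_sub, ← h]
  abel

theorem evenHom_bilin_eq_neg_swap (hxy : Q.IsOrtho x y) : g.bilin x y = -g.bilin y x := by
  rw [eq_neg_iff_add_eq_zero, evenHom_bilin_add_swap, hxy.polar_eq_zero, map_zero]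

theorem evenHom_bilin_mul_bilin_same_right (hyz : Q.IsOrtho y z) :
    g.bilin x z * g.bilin y z = -(Q z • g.bilin x y) := by
  rw [evenHom_bilin_eq_neg_swap g hyz, mul_neg, g.contract_mid]

theorem evenHom_bilin_mul_bilin_same_outer (hxy : Q.IsOrtho x y) (hzx : Q.IsOrtho z x) :
    g.bilin x y * g.bilin z x = Q x • g.bilin y z := by
  rw [evenHom_bilin_eq_neg_swap g hxy, evenHom_bilin_eq_neg_swap g hzx, neg_mul_neg,
    g.contract_mid]

end EvenHom

section Curvature

variable {K M V : Type*} [CommRing K] [AddCommGroup M] [Module K M] [AddCommGroup V] [Module K V]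
  {Q : QuadraticForm K M} (g : EvenHom Q (Module.End K V)) (B : LinearMap.BilinForm K V) {a b : M}

theorem neg_bilin_mul_curvature_summand {s : M} (hab : Q.IsOrtho a b) (hsa : Q.IsOrtho s a)
    (hsb : Q.IsOrtho s b) (X Y : V) :
    -(g.bilin a b * (B (g.bilin s a (g.bilin a b X)) Y • g.bilin s b
        - B (g.bilin s b (g.bilin a b X)) Y • g.bilin s a)) =
      (Q a * Q b) • (-(B (g.bilin s b X) Y • g.bilin s a)
        + B (g.bilin s a X) Y • g.bilin s b) := by
  have hsa_ab : g.bilin s a (g.bilin a b X) = Q a • g.bilin s b X :=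
    LinearMap.congr_fun (g.contract_mid s a b) X
  have hsb_ab : g.bilin s b (g.bilin a b X) = -(Q b • g.bilin s a X) :=
    LinearMap.congr_fun (evenHom_bilin_mul_bilin_same_right g hab) X
  have hab_sa : g.bilin a b * g.bilin s a = -(Q a • g.bilin s b) := by
    rw [evenHom_bilin_mul_bilin_same_outer g hab hsa, evenHom_bilin_eq_neg_swap g hsb.symm,
      smul_neg]
  have hab_sb : g.bilin a b * g.bilin s b = Q b • g.bilin s a := by
    rw [evenHom_bilin_mul_bilin_same_right g hsb, evenHom_bilin_eq_neg_swap g hsa.symm,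
      smul_neg, neg_neg]
  rw [hsa_ab, hsb_ab, mul_sub, mul_smul_comm, mul_smul_comm, hab_sa, hab_sb]
  simp only [map_neg, map_smul, LinearMap.neg_apply, LinearMap.smul_apply, smul_eq_mul]
  module

theorem stmt6_general {ι : Type*} (e : ι → M) (S : Finset ι) (hab : Q.IsOrtho a b)
    (ha : ∀ s ∈ S, Q.IsOrtho (e s) a) (hb : ∀ s ∈ S, Q.IsOrtho (e s) b)
    (κ : K) (R : V → V → Module.End K V)
    (hR : ∀ X Y : V, ⁅R X Y, g.bilin a b⁆ =
      κ • ∑ s ∈ S, (B (g.bilin (e s) a X) Y • g.bilin (e s) b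
        - B (g.bilin (e s) b X) Y • g.bilin (e s) a))
    (X Y : V) :
    -(g.bilin a b * ⁅R (g.bilin a b X) Y, g.bilin a b⁆) =
      (Q a * Q b) • κ • ∑ s ∈ S, (-(B (g.bilin (e s) b X) Y • g.bilin (e s) a)
        + B (g.bilin (e s) a X) Y • g.bilin (e s) b) := by
  rw [hR, mul_smul_comm, ← smul_neg, Finset.mul_sum, ← Finset.sum_neg_distrib,
    smul_comm (Q a * Q b), Finset.smul_sum (r := Q a * Q b)]
  exact congrArg (κ • ·) <| Finset.sum_congr rfl fun s hs =>
    neg_bilin_mul_curvature_summand g B hab (ha s hs) (hb s hs) X Y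

end Curvature

theorem isOrtho_of_inner_eq_zero {E : Type*} [NormedAddCommGroup E] [InnerProductSpace ℝ E]
    {Q : QuadraticForm ℝ E} (hQ : ∀ v, Q v = -‖v‖ ^ 2) {x y : E} (h : ⟪x, y⟫ = 0) :
    Q.IsOrtho x y := by
  rw [QuadraticMap.isOrtho_def, hQ, hQ, hQ, norm_add_sq_real, h]
  ring

theorem stmt6
    (V : Type*) [NormedAddCommGroup V] [InnerProductSpace ℝ V] [FiniteDimensional ℝ V]
    (r : ℕ) (hr : 3 ≤ r)
    (Q : QuadraticForm ℝ (EuclideanSpace ℝ (Fin r)))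
    (hQ : ∀ v : EuclideanSpace ℝ (Fin r), Q v = -‖v‖ ^ 2)
    (φ : CliffordAlgebra.even Q →ₐ[ℝ] Module.End ℝ V)
    (e : Fin r → EuclideanSpace ℝ (Fin r))
    (he : ∀ i, e i = EuclideanSpace.single i (1 : ℝ))
    (J : Fin r → Fin r → Module.End ℝ V)
    (hJ : ∀ i j, J i j = φ ((CliffordAlgebra.even.ι Q).bilin (e i) (e j)))
    (hskew : ∀ i j, i ≠ j → ∀ x y : V, ⟪J i j x, y⟫ = -⟪x, J i j y⟫)
    (κ : ℝ) (R : V →ₗ[ℝ] V →ₗ[ℝ] Module.End ℝ V)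
    (hR : ∀ X Y : V,
      ⁅R X Y, J ⟨0, by omega⟩ ⟨1, by omega⟩⁆ =
        κ • ∑ s ∈ Finset.univ.filter (fun s : Fin r => 2 ≤ (s : ℕ)),
          (⟪J s ⟨0, by omega⟩ X, Y⟫ • J s ⟨1, by omega⟩
            - ⟪J s ⟨1, by omega⟩ X, Y⟫ • J s ⟨0, by omega⟩)) :
    ∀ X Y : V,
      -(J ⟨0, by omega⟩ ⟨1, by omega⟩ * ⁅R (J ⟨0, by omega⟩ ⟨1, by omega⟩ X) Y, J ⟨0, by omega⟩ ⟨1, by omega⟩⁆) =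
        κ • ∑ s ∈ Finset.univ.filter (fun s : Fin r => 2 ≤ (s : ℕ)),
          (-(⟪J s ⟨1, by omega⟩ X, Y⟫ • J s ⟨0, by omega⟩)
            + ⟪J s ⟨0, by omega⟩ X, Y⟫ • J s ⟨1, by omega⟩) := by
  have horthonormal : Orthonormal ℝ e := funext he ▸ EuclideanSpace.orthonormal_single
  have hortho {i j : Fin r} (hij : i ≠ j) : Q.IsOrtho (e i) (e j) :=
    isOrtho_of_inner_eq_zero hQ (horthonormal.2 hij)
  have hunit (i : Fin r) : Q (e i) = -1 := by rw [hQ, horthonormal.1 i, one_pow]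
  obtain rfl : J = fun i j => ((even.ι Q).compr₂ φ).bilin (e i) (e j) := funext₂ hJ
  simpa only [hunit, neg_mul_neg, one_mul, one_smul, innerₗ_apply_apply] using
    stmt6_general ((even.ι Q).compr₂ φ) (innerₗ V) e _ (hortho (by simp))
      (fun _ hs => hortho (by grind)) (fun _ hs => hortho (by grind)) κ (fun X Y => R X Y) hR
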